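/- arXiv:1904.11137 — 4 statements merged into one kernel-verified Lean document; each statement's English description precedes it below -/
import Mathlib

section
/- Let h : ℝ^l → ℝ^{l×m} be continuous, β : ℝ^l → ℝ^m continuously differentiable with Jacobian ∂β/∂x = -λ h(x)ᵀ for some λ > 0, let w ∈ ℝ^m be constant, and let f : ℝ → ℝ^l be any function. Suppose (x(t), ŵ(t)) is a differentiable solution of ẋ = f(t) + h(x)(w − ŵ + β(x)), ŵ̇ = -λ h(x)ᵀ f(t). Then the error z(t) := β(x(t)) − (ŵ(t) − w) satisfies ż = -λ h(x(t))ᵀ h(x(t)) z, and consequently d/dt ( zᵀz/(2λ) ) = -‖h(x(t)) z(t)‖² for all t. -/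
/-!
By the chain rule, `β (x t)` has derivative `-λ hᵀ (f + h z)`, since `w - ŵ + β(x) = z`.
Subtracting the derivative `-λ hᵀ f` of `ŵ` cancels the coupling `f` and leaves `-λ hᵀ h z`.
Differentiating `‖z‖² / (2λ)` then gives `-⟪z, hᵀ h z⟫`, which is `-‖h z‖²` by
`inner_toE_gram`.
-/

open Matrix Filter

/-- Interpret a plain vector as an element of Euclidean space (`ℓ²` norm). -/
noncomputable def toE {ι : Type*} [Fintype ι] (v : ι → ℝ) : EuclideanSpace ℝ ι :=
  (EuclideanSpace.equiv ι ℝ).symm v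

/-- The adjoint identity `⟪z, AᵀA z⟫ = ‖A z‖²`, in coordinates. -/
lemma inner_toE_gram {l m : ℕ} (A : Matrix (Fin l) (Fin m) ℝ) (z : EuclideanSpace ℝ (Fin m)) :
    inner ℝ z (toE ((Aᵀ * A).mulVec z)) = ‖toE (A.mulVec z)‖ ^ 2 := by
  have key : ((Aᵀ * A) *ᵥ z.ofLp) ⬝ᵥ z.ofLp = (A *ᵥ z.ofLp) ⬝ᵥ (A *ᵥ z.ofLp) := by
    rw [← Matrix.mulVec_mulVec, Matrix.mulVec_transpose, ← Matrix.dotProduct_mulVec]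
  rw [← real_inner_self_eq_norm_sq]
  simp only [toE, EuclideanSpace.inner_eq_star_dotProduct]
  exact key

/-- **Invariant-manifold error dynamics (key computation of Theorem 2).**
For `ẋ = f(t) + h(x)(w − ŵ + β(x))`, `ŵ̇ = -λ h(x)ᵀ f(t)`, with `∂β/∂x = -λ h(x)ᵀ`, the error
`z = β(x) − (ŵ − w)` satisfies `ż = -λ h(x)ᵀ h(x) z`, hence `d/dt (zᵀz/(2λ)) = -‖h(x) z‖²`. -/
theorem stmt2 (l m : ℕ)
    (h : EuclideanSpace ℝ (Fin l) → Matrix (Fin l) (Fin m) ℝ) (hcont : Continuous h)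
    (lam : ℝ) (hlam : 0 < lam)
    (β : EuclideanSpace ℝ (Fin l) → EuclideanSpace ℝ (Fin m)) (hβ : ContDiff ℝ 1 β)
    (hJac : ∀ x u, fderiv ℝ β x u = (-lam) • toE ((h x)ᵀ.mulVec u))
    (w : EuclideanSpace ℝ (Fin m)) (f : ℝ → EuclideanSpace ℝ (Fin l))
    (x : ℝ → EuclideanSpace ℝ (Fin l)) (what : ℝ → EuclideanSpace ℝ (Fin m))
    (hx : ∀ t, HasDerivAt x (f t + toE ((h (x t)).mulVec (w - what t + β (x t)))) t)
    (hwhat : ∀ t, HasDerivAt what ((-lam) • toE ((h (x t))ᵀ.mulVec (f t))) t) :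
    ∀ t, HasDerivAt (fun s => β (x s) - (what s - w))
        ((-lam) • toE (((h (x t))ᵀ * h (x t)).mulVec (β (x t) - (what t - w)))) t ∧
      HasDerivAt (fun s => ‖β (x s) - (what s - w)‖ ^ 2 / (2 * lam))
        (-‖toE ((h (x t)).mulVec (β (x t) - (what t - w)))‖ ^ 2) t := by
  intro t
  have hz : HasDerivAt (fun s => β (x s) - (what s - w))
      ((-lam) • toE (((h (x t))ᵀ * h (x t)).mulVec (β (x t) - (what t - w)))) t := by
    have hβx := ((hβ.differentiable one_ne_zero) (x t)).hasFDerivAt.comp_hasDerivAt t (hx t)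
    refine (hβx.sub ((hwhat t).sub_const w)).congr_deriv ?_
    -- The coupling term `f` enters both derivatives as `-λ hᵀ f` and cancels.
    have hsub : (β (x t)).ofLp - ((what t).ofLp - w.ofLp)
        = w.ofLp - (what t).ofLp + (β (x t)).ofLp := by abel
    rw [hJac, ← smul_sub]
    congr 1
    ext i
    simp [toE, Matrix.mulVec_add, ← Matrix.mulVec_mulVec, hsub]
  refine ⟨hz, ?_⟩
  refine (hz.norm_sq.div_const (2 * lam)).congr_deriv ?_
  rw [inner_smul_right]
  have hg := inner_toE_gram (h (x t)) (β (x t) - (what t - w))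
  simp only [WithLp.ofLp_sub] at hg ⊢
  rw [hg]
  field_simp
end

section
/- Let α₁, α₂ ∈ ℝ and let J be a real (n−1)×(n−1) matrix all of whose eigenvalues have positive real part. Then there exist γ₁ > 0 and γ₂ > 0 such that the 2(n−1)×2(n−1) block matrix Ā = [[0, I], [α₁I − γ₁J, α₂I − γ₂J]] is Hurwitz, i.e., every eigenvalue of Ā has negative real part. -/
open Matrix

/-!
If `μ` is an eigenvalue of `Ā` with eigenvector `(x, y)`, then `y = μ x` and
`(γ₁ + γ₂ μ) J x = (α₁ + α₂ μ - μ²) x` with `x ≠ 0`. Suppose `0 ≤ Re μ`. Then `γ₁ + γ₂ μ ≠ 0`,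
so `J` has an eigenvalue `l` with `(γ₁ + γ₂ μ) l = α₁ + α₂ μ - μ²`
(`exists_eigenvalue_of_block`). As the spectrum of `J` is finite, `δ ≤ Re l` and `‖l‖ ≤ M` for
constants `δ > 0` and `M` (`exists_spectral_bounds`).

* If `‖μ‖ ≤ 1`, dividing by `l` bounds `γ₁ ≤ Re (γ₁ + γ₂ μ)` by `(|α₁| + |α₂| + 1) / δ`.
* If `‖μ‖ ≥ 1`, dividing by `μ` gives `γ₂ l + μ = α₂ + (α₁ - γ₁ l) / μ`, which bounds
  `γ₂ δ ≤ Re (γ₂ l + μ)` by `|α₂| + |α₁| + γ₁ M`.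

Hence it suffices to choose `γ₁` large, and then `γ₂` large depending on `γ₁`
(`re_neg_of_quadratic`).
-/

/-- A real square matrix is Hurwitz if all of its (complex) eigenvalues have
negative real part. -/
def IsHurwitz {ι : Type*} [Fintype ι] [DecidableEq ι] (A : Matrix ι ι ℝ) : Prop :=
  ∀ μ ∈ spectrum ℂ (A.map (algebraMap ℝ ℂ)), μ.re < 0

lemma mem_spectrum_iff_exists_mulVec {ι : Type*} [Fintype ι] [DecidableEq ι]
    (A : Matrix ι ι ℂ) (μ : ℂ) :
    μ ∈ spectrum ℂ A ↔ ∃ v : ι → ℂ, v ≠ 0 ∧ A *ᵥ v = μ • v := by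
  rw [spectrum.mem_iff, Matrix.isUnit_iff_isUnit_det, isUnit_iff_ne_zero, not_not,
    ← Matrix.exists_mulVec_eq_zero_iff]
  simp only [Matrix.sub_mulVec, Algebra.algebraMap_eq_smul_one, Matrix.smul_mulVec,
    Matrix.one_mulVec, sub_eq_zero, eq_comm]

lemma exists_spectral_bounds {ι : Type*} [Fintype ι] [DecidableEq ι] (A : Matrix ι ι ℂ)
    (hA : ∀ μ ∈ spectrum ℂ A, 0 < μ.re) :
    ∃ δ > (0 : ℝ), ∃ M > (0 : ℝ), ∀ μ ∈ spectrum ℂ A, δ ≤ μ.re ∧ ‖μ‖ ≤ M := by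
  have hfin : (spectrum ℂ A).Finite := Matrix.finite_spectrum A
  obtain ⟨K, hK⟩ := (hfin.image fun z : ℂ => z.re⁻¹).bddAbove
  obtain ⟨M, hM⟩ := (hfin.image fun z : ℂ => ‖z‖).bddAbove
  have hK1 : 0 < max K 1 := lt_max_of_lt_right one_pos
  refine ⟨(max K 1)⁻¹, inv_pos.2 hK1, max M 1, lt_max_of_lt_right one_pos, fun μ hμ => ⟨?_, ?_⟩⟩
  · have h : μ.re⁻¹ ≤ max K 1 := (hK ⟨μ, hμ, rfl⟩).trans (le_max_left _ _)
    exact inv_le_of_inv_le₀ (hA μ hμ) h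
  · exact (hM ⟨μ, hμ, rfl⟩).trans (le_max_left _ _)

lemma exists_eigenvalue_of_block {ι : Type*} [Fintype ι] [DecidableEq ι] (J : Matrix ι ι ℝ)
    (α₁ α₂ γ₁ γ₂ : ℝ) (μ : ℂ)
    (hμ : μ ∈ spectrum ℂ ((Matrix.fromBlocks 0 1 (α₁ • 1 - γ₁ • J) (α₂ • 1 - γ₂ • J) :
      Matrix (ι ⊕ ι) (ι ⊕ ι) ℝ).map (algebraMap ℝ ℂ)))
    (h0 : (γ₁ : ℂ) + γ₂ * μ ≠ 0) :
    ∃ l ∈ spectrum ℂ (J.map (algebraMap ℝ ℂ)),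
      ((γ₁ : ℂ) + γ₂ * μ) * l = α₁ + α₂ * μ - μ ^ 2 := by
  obtain ⟨v, hv0, hv⟩ := (mem_spectrum_iff_exists_mulVec _ _).1 hμ
  have hmap : ∀ a g : ℝ, (a • (1 : Matrix ι ι ℝ) - g • J).map (algebraMap ℝ ℂ)
      = (a : ℂ) • (1 : Matrix ι ι ℂ) - (g : ℂ) • J.map (algebraMap ℝ ℂ) := by
    intro a g
    ext i j
    by_cases hij : i = j <;> simp [hij]
  rw [Matrix.fromBlocks_map, hmap, hmap, Matrix.map_zero _ (map_zero _),
    Matrix.map_one _ (map_zero _) (map_one _), Matrix.fromBlocks_mulVec] at hv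
  set x : ι → ℂ := v ∘ Sum.inl with hx
  set y : ι → ℂ := v ∘ Sum.inr with hy
  have hy1 : y = μ • x := by
    ext i
    simpa [hx] using congrFun hv (Sum.inl i)
  have hx0 : x ≠ 0 := by
    intro h
    apply hv0
    ext (i | i)
    · exact congrFun h i
    · have := congrFun hy1 i
      rw [h] at this
      simpa [hy] using this
  refine ⟨(α₁ + α₂ * μ - μ ^ 2) / (γ₁ + γ₂ * μ), ?_, mul_div_cancel₀ _ h0⟩
  refine (mem_spectrum_iff_exists_mulVec _ _).2 ⟨x, hx0, ?_⟩
  ext i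
  have h2 := congrFun hv (Sum.inr i)
  have hyi : v (Sum.inr i) = μ * x i := congrFun hy1 i
  simp only [Sum.elim_inr, hy1, Matrix.sub_mulVec, Matrix.smul_mulVec, Matrix.one_mulVec,
    Matrix.mulVec_smul, Pi.add_apply, Pi.sub_apply, Pi.smul_apply, smul_eq_mul, hyi] at h2 ⊢
  rw [div_mul_eq_mul_div, eq_div_iff h0]
  linear_combination -h2

lemma re_neg_of_quadratic {α₁ α₂ γ₁ γ₂ δ M : ℝ} {μ l : ℂ} (hδ : 0 < δ) (hγ₁ : 0 < γ₁)
    (hγ₂ : 0 < γ₂) (hl : δ ≤ l.re) (hM : ‖l‖ ≤ M)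
    (h₁ : |α₁| + |α₂| + 1 < γ₁ * δ) (h₂ : |α₂| + |α₁| + γ₁ * M < γ₂ * δ)
    (h : ((γ₁ : ℂ) + γ₂ * μ) * l = α₁ + α₂ * μ - μ ^ 2) : μ.re < 0 := by
  by_contra! hμ
  have e₁ : ‖(α₁ : ℂ)‖ = |α₁| := Complex.norm_real _
  have e₂ : ‖(α₂ : ℂ)‖ = |α₂| := Complex.norm_real _
  have e₃ : ‖(γ₁ : ℂ)‖ = γ₁ := by rw [Complex.norm_real, Real.norm_of_nonneg hγ₁.le]
  rcases le_total ‖μ‖ 1 with h1 | h1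
  · have hA : γ₁ ≤ ‖(γ₁ : ℂ) + γ₂ * μ‖ := by
      refine le_trans ?_ (Complex.re_le_norm _)
      simpa using mul_nonneg hγ₂.le hμ
    have hB : γ₁ * δ ≤ ‖((γ₁ : ℂ) + γ₂ * μ) * l‖ := by
      rw [norm_mul]
      exact mul_le_mul hA (hl.trans (Complex.re_le_norm _)) hδ.le (norm_nonneg _)
    have hC : ‖(α₁ : ℂ) + α₂ * μ - μ ^ 2‖ ≤ |α₁| + |α₂| * ‖μ‖ + ‖μ‖ ^ 2 := by
      refine (norm_sub_le _ _).trans ?_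
      rw [norm_pow]
      gcongr
      refine (norm_add_le _ _).trans ?_
      rw [norm_mul, e₁, e₂]
    rw [h] at hB
    have := mul_le_of_le_one_right (abs_nonneg α₂) h1
    have := pow_le_one₀ (n := 2) (norm_nonneg μ) h1
    linarith
  · have hμ0 : 0 < ‖μ‖ := by linarith
    have hA : γ₂ * δ ≤ ‖(γ₂ : ℂ) * l + μ‖ := by
      refine le_trans ?_ (Complex.re_le_norm _)
      have := mul_le_mul_of_nonneg_left hl hγ₂.le
      simp
      linarith
    have hE : ((γ₂ : ℂ) * l + μ) * μ = α₂ * μ + (α₁ - γ₁ * l) := by linear_combination h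
    have hB : ‖(γ₂ : ℂ) * l + μ‖ * ‖μ‖ ≤ |α₂| * ‖μ‖ + (|α₁| + γ₁ * ‖l‖) := by
      rw [← norm_mul, hE]
      refine (norm_add_le _ _).trans ?_
      rw [norm_mul, e₂]
      gcongr
      refine (norm_sub_le _ _).trans ?_
      rw [norm_mul, e₁, e₃]
    have hlM := mul_le_mul_of_nonneg_left hM hγ₁.le
    have hD : |α₁| + γ₁ * ‖l‖ ≤ (|α₁| + γ₁ * ‖l‖) * ‖μ‖ :=
      le_mul_of_one_le_right (by positivity) h1
    have hF : ‖(γ₂ : ℂ) * l + μ‖ ≤ |α₂| + (|α₁| + γ₁ * ‖l‖) :=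
      le_of_mul_le_mul_right (by linarith) hμ0
    linarith

/-- **Lemma 1.** If all eigenvalues of `J` have positive real part, then there exist
`γ₁, γ₂ > 0` such that `Ā = [[0, I], [α₁I − γ₁J, α₂I − γ₂J]]` is Hurwitz. -/
theorem stmt4 (n : ℕ) (α₁ α₂ : ℝ) (J : Matrix (Fin (n - 1)) (Fin (n - 1)) ℝ)
    (hJ : ∀ μ ∈ spectrum ℂ (J.map (algebraMap ℝ ℂ)), 0 < μ.re) :
    ∃ γ₁ > (0 : ℝ), ∃ γ₂ > (0 : ℝ),
      IsHurwitz (Matrix.fromBlocks 0 1 (α₁ • 1 - γ₁ • J) (α₂ • 1 - γ₂ • J)) := by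
  obtain ⟨δ, hδ, M, hM, hb⟩ := exists_spectral_bounds _ hJ
  obtain ⟨γ₁, hγ₁, h₁⟩ : ∃ γ₁ > (0 : ℝ), |α₁| + |α₂| + 1 < γ₁ * δ :=
    ⟨(|α₁| + |α₂| + 2) / δ, by positivity, by rw [div_mul_cancel₀ _ hδ.ne']; linarith⟩
  obtain ⟨γ₂, hγ₂, h₂⟩ : ∃ γ₂ > (0 : ℝ), |α₂| + |α₁| + γ₁ * M < γ₂ * δ :=
    ⟨(|α₂| + |α₁| + γ₁ * M + 1) / δ, by positivity, by
      rw [div_mul_cancel₀ _ hδ.ne']; linarith⟩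
  refine ⟨γ₁, hγ₁, γ₂, hγ₂, fun μ hμ => ?_⟩
  by_contra! hre
  have h0 : (γ₁ : ℂ) + γ₂ * μ ≠ 0 := by
    intro h
    have h' := congrArg Complex.re h
    simp at h'
    have := mul_nonneg hγ₂.le hre
    linarith
  obtain ⟨l, hl, hq⟩ := exists_eigenvalue_of_block J α₁ α₂ γ₁ γ₂ μ hμ h0
  exact absurd (re_neg_of_quadratic hδ hγ₁ hγ₂ (hb l hl).1 (hb l hl).2 h₁ h₂ hq) hre.not_gt
end

section
/- Let α₁, α₂ ∈ ℝ, let J be a real (n−1)×(n−1) matrix, let P_J be a symmetric real (n−1)×(n−1) matrix satisfying P_J J + Jᵀ P_J = I, let c > 0, γ₁ > 0 and set γ₂ = cγ₁. Define the 2(n−1)×2(n−1) matrices Ā = [[0, I], [α₁I − γ₁J, α₂I − γ₂J]], P = [[γ₁P_J, P_J], [P_J, cP_J]], Q = [[−I, P_J − cI], [P_J − cI, −c²I]], and Q_c = [[2α₁P_J, (α₂ + α₁c)P_J], [(α₂ + α₁c)P_J, 2(1 + α₂c)P_J]]. Then P Ā + Āᵀ P = γ₁ Q + Q_c. -/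
open Matrix

/-- **Central computation of the appendix proof of Lemma 1.** With `P_J J + Jᵀ P_J = I`,
`γ₂ = cγ₁`, `P = [[γ₁P_J, P_J], [P_J, cP_J]]`, `Ā = [[0, I], [α₁I − γ₁J, α₂I − γ₂J]]`,
`Q = [[−I, P_J − cI], [P_J − cI, −c²I]]`, and
`Q_c = [[2α₁P_J, (α₂ + α₁c)P_J], [(α₂ + α₁c)P_J, 2(1 + α₂c)P_J]]`,
one has `P Ā + Āᵀ P = γ₁ Q + Q_c`. -/
theorem stmt7 (n : ℕ) (α₁ α₂ : ℝ) (J PJ : Matrix (Fin (n - 1)) (Fin (n - 1)) ℝ)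
    (hPJsymm : PJᵀ = PJ) (hLyap : PJ * J + Jᵀ * PJ = 1)
    (c γ₁ γ₂ : ℝ) (hc : 0 < c) (hγ₁ : 0 < γ₁) (hγ₂ : γ₂ = c * γ₁) :
    (Matrix.fromBlocks (γ₁ • PJ) PJ PJ (c • PJ)) *
          (Matrix.fromBlocks 0 1 (α₁ • 1 - γ₁ • J) (α₂ • 1 - γ₂ • J)) +
        (Matrix.fromBlocks 0 1 (α₁ • 1 - γ₁ • J) (α₂ • 1 - γ₂ • J))ᵀ *
          (Matrix.fromBlocks (γ₁ • PJ) PJ PJ (c • PJ)) =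
      γ₁ • (Matrix.fromBlocks (-1) (PJ - c • 1) (PJ - c • 1) (-(c ^ 2) • 1)) +
        (Matrix.fromBlocks ((2 * α₁) • PJ) ((α₂ + α₁ * c) • PJ)
          ((α₂ + α₁ * c) • PJ) ((2 * (1 + α₂ * c)) • PJ)) := by
  subst hγ₂
  simp only [fromBlocks_transpose, fromBlocks_multiply, fromBlocks_add, fromBlocks_smul,
    transpose_sub, transpose_smul, transpose_one, transpose_zero, Matrix.mul_sub, Matrix.sub_mul,
    Matrix.mul_smul, Matrix.smul_mul, Matrix.mul_one, Matrix.one_mul, Matrix.mul_zero,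
    Matrix.zero_mul]
  -- The identity blocks remaining on the right come from the Lyapunov equation; after replacing
  -- them, each block is a linear identity in `PJ`, `PJ * J` and `Jᵀ * PJ`.
  rw [← hLyap]
  congr 1 <;> module
end

section
/- Let L ∈ ℝ^{n×n}, W ∈ ℝ^{(n−1)×n}, J ∈ ℝ^{(n−1)×(n−1)} with J W = W L, let α₁, α₂, γ₁, γ₂ ∈ ℝ be such that Ā = [[0, I], [α₁I − γ₁J, α₂I − γ₂J]] is Hurwitz, and let P = Pᵀ > 0 solve the Lyapunov equation P Ā + Āᵀ P = −I. For p, v ∈ ℝⁿ write y(p,v) = (Wp, Wv) ∈ ℝ^{2(n−1)} and define V(p,v) = y(p,v)ᵀ P y(p,v). Then (i) P_min‖y(p,v)‖² ≤ V(p,v) ≤ P_max‖y(p,v)‖², where P_min and P_max are the smallest and largest eigenvalues of P; and (ii) along any differentiable solution of ṗ = v, v̇ = α₁p + α₂v − γ₁Lp − γ₂Lv, one has d/dt V(p(t), v(t)) = −‖y(p(t), v(t))‖². -/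
/-!
With `y = (Wp, Wv)` and `JW = WL`, any solution of the network dynamics satisfies the closed
linear system `ẏ = Ā y` (`stacked_field_eq`). Differentiating the quadratic form `yᵀPy`
(`hasDerivAt_quadForm`) gives `(Āy)ᵀPy + yᵀP(Āy) = yᵀ(PĀ + ĀᵀP)y`, which the Lyapunov equation
turns into `-‖y‖²`. The two-sided bound is the Rayleigh quotient estimate: in an orthonormal
eigenbasis `b` of `P`, `yᵀPy = ∑ λᵢ ⟪bᵢ, y⟫²` and `‖y‖² = ∑ ⟪bᵢ, y⟫²`.
-/

open Matrix Filter

/-- The stacked disagreement vector `y(p,v) = (Wp, Wv) ∈ ℝ^{2(n−1)}`. -/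
noncomputable def yvec {n : ℕ} (W : Matrix (Fin (n - 1)) (Fin n) ℝ)
    (p v : EuclideanSpace ℝ (Fin n)) : EuclideanSpace ℝ (Fin (n - 1) ⊕ Fin (n - 1)) :=
  toE (Sum.elim (W.mulVec p) (W.mulVec v))

/-- The quadratic form of a real symmetric matrix, diagonalised in its eigenvector basis. -/
lemma quadForm_eq_sum_eigenvalues {ι : Type*} [Fintype ι] [DecidableEq ι] {P : Matrix ι ι ℝ}
    (hP : P.IsHermitian) (x : EuclideanSpace ℝ ι) :
    x ⬝ᵥ P.mulVec x = ∑ i, hP.eigenvalues i * inner ℝ (hP.eigenvectorBasis i) x ^ 2 := by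
  have hT : Pᵀ = P := by simpa [Matrix.IsHermitian] using hP
  have hinner : ∀ u w : EuclideanSpace ℝ ι, inner ℝ u w = u ⬝ᵥ w := fun u w => by
    rw [EuclideanSpace.inner_eq_star_dotProduct, dotProduct_comm]; simp
  have heig : ∀ i, inner ℝ (hP.eigenvectorBasis i) (WithLp.toLp 2 (P.mulVec x)) =
      hP.eigenvalues i * inner ℝ (hP.eigenvectorBasis i) x := fun i => by
    rw [hinner, hinner, dotProduct_mulVec, ← mulVec_transpose, hT,
      hP.mulVec_eigenvectorBasis, smul_dotProduct, smul_eq_mul]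
  calc x ⬝ᵥ P.mulVec x = inner ℝ x (WithLp.toLp 2 (P.mulVec x)) :=
        (hinner x (WithLp.toLp 2 (P.mulVec x))).symm
    _ = _ := by
      rw [← hP.eigenvectorBasis.sum_inner_mul_inner]
      refine Finset.sum_congr rfl fun i _ => ?_
      rw [heig, real_inner_comm]; ring

lemma norm_sq_eq_sum_eigenvectorBasis {ι : Type*} [Fintype ι] [DecidableEq ι]
    {P : Matrix ι ι ℝ} (hP : P.IsHermitian) (x : EuclideanSpace ℝ ι) :
    ‖x‖ ^ 2 = ∑ i, inner ℝ (hP.eigenvectorBasis i) x ^ 2 := by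
  simp [← hP.eigenvectorBasis.sum_sq_norm_inner_right x]

lemma iInf_eigenvalues_mul_le {ι : Type*} [Fintype ι] [DecidableEq ι] {P : Matrix ι ι ℝ}
    (hP : P.IsHermitian) (x : EuclideanSpace ℝ ι) :
    (⨅ i, hP.eigenvalues i) * ‖x‖ ^ 2 ≤ x ⬝ᵥ P.mulVec x := by
  rw [quadForm_eq_sum_eigenvalues hP, norm_sq_eq_sum_eigenvectorBasis hP, Finset.mul_sum]
  exact Finset.sum_le_sum fun i _ =>
    mul_le_mul_of_nonneg_right (ciInf_le (Set.finite_range _).bddBelow i) (sq_nonneg _)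

lemma le_iSup_eigenvalues_mul {ι : Type*} [Fintype ι] [DecidableEq ι] {P : Matrix ι ι ℝ}
    (hP : P.IsHermitian) (x : EuclideanSpace ℝ ι) :
    x ⬝ᵥ P.mulVec x ≤ (⨆ i, hP.eigenvalues i) * ‖x‖ ^ 2 := by
  rw [quadForm_eq_sum_eigenvalues hP, norm_sq_eq_sum_eigenvectorBasis hP, Finset.mul_sum]
  exact Finset.sum_le_sum fun i _ =>
    mul_le_mul_of_nonneg_right (le_ciSup (Set.finite_range _).bddAbove i) (sq_nonneg _)

lemma hasDerivAt_mulVec {ι κ : Type*} [Fintype ι] [Fintype κ] (M : Matrix κ ι ℝ)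
    {y : ℝ → ι → ℝ} {y' : ι → ℝ} {t : ℝ} (hy : HasDerivAt y y' t) :
    HasDerivAt (fun s => M.mulVec (y s)) (M.mulVec y') t :=
  (LinearMap.toContinuousLinearMap M.mulVecLin).hasFDerivAt.comp_hasDerivAt t hy

lemma hasDerivAt_quadForm {ι : Type*} [Fintype ι] (P : Matrix ι ι ℝ)
    {y : ℝ → ι → ℝ} {y' : ι → ℝ} {t : ℝ} (hy : HasDerivAt y y' t) :
    HasDerivAt (fun s => y s ⬝ᵥ P.mulVec (y s)) (y' ⬝ᵥ P.mulVec (y t) + y t ⬝ᵥ P.mulVec y') t := by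
  have hPy := hasDerivAt_mulVec P hy
  simp only [dotProduct, ← Finset.sum_add_distrib]
  exact HasDerivAt.fun_sum fun i _ => (hasDerivAt_pi.1 hy i).mul (hasDerivAt_pi.1 hPy i)

/-- A solution of the Lyapunov equation `PA + AᵀP = -I` makes the derivative of `yᵀPy` along
`ẏ = Ay` equal to `-yᵀy`. -/
lemma lyapunov_quadForm {ι : Type*} [Fintype ι] [DecidableEq ι] {P A : Matrix ι ι ℝ}
    (hLyap : P * A + Aᵀ * P = -1) (y : ι → ℝ) :
    A.mulVec y ⬝ᵥ P.mulVec y + y ⬝ᵥ P.mulVec (A.mulVec y) = -(y ⬝ᵥ y) := by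
  have h : A.mulVec y ⬝ᵥ P.mulVec y = y ⬝ᵥ (Aᵀ * P).mulVec y := by
    rw [← mulVec_mulVec, dotProduct_mulVec y Aᵀ, vecMul_transpose]
  rw [h, mulVec_mulVec, ← dotProduct_add, ← add_mulVec, add_comm, hLyap, neg_mulVec, one_mulVec,
    dotProduct_neg]

/-- Applying `W` to both components of the network vector field yields `Ā (Wp, Wv)`; this is
where the intertwining relation `JW = WL` enters. -/
lemma stacked_field_eq {m n : Type*} [Fintype m] [Fintype n] [DecidableEq m]
    {L : Matrix n n ℝ} {W : Matrix m n ℝ} {J : Matrix m m ℝ} (hJW : J * W = W * L)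
    (α₁ α₂ γ₁ γ₂ : ℝ) (p v : n → ℝ) :
    Sum.elim (W.mulVec v)
        (W.mulVec (α₁ • p + α₂ • v - γ₁ • L.mulVec p - γ₂ • L.mulVec v)) =
      (Matrix.fromBlocks 0 1 (α₁ • 1 - γ₁ • J) (α₂ • 1 - γ₂ • J)).mulVec
        (Sum.elim (W.mulVec p) (W.mulVec v)) := by
  rw [fromBlocks_mulVec]
  simp only [Sum.elim_comp_inl, Sum.elim_comp_inr, mulVec_mulVec, Matrix.sub_mul,
    Matrix.smul_mul, Matrix.one_mul, Matrix.zero_mul, hJW, zero_mulVec, zero_add, sub_mulVec,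
    smul_mulVec, mulVec_sub, mulVec_add, mulVec_smul]
  congr 1
  abel

/-- **Lemma 3.** With `JW = WL`, `Ā = [[0, I], [α₁I − γ₁J, α₂I − γ₂J]]` Hurwitz and
`P = Pᵀ > 0` solving `PĀ + ĀᵀP = −I`, the function `V(p,v) = y(p,v)ᵀ P y(p,v)`,
`y(p,v) = (Wp, Wv)`, satisfies `P_min‖y‖² ≤ V ≤ P_max‖y‖²` and, along solutions of
`ṗ = v`, `v̇ = α₁p + α₂v − γ₁Lp − γ₂Lv`, `d/dt V(p(t),v(t)) = −‖y(p(t),v(t))‖²`. -/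
theorem stmt12 (n : ℕ) (hn : 2 ≤ n) (L : Matrix (Fin n) (Fin n) ℝ)
    (W : Matrix (Fin (n - 1)) (Fin n) ℝ) (J : Matrix (Fin (n - 1)) (Fin (n - 1)) ℝ)
    (hJW : J * W = W * L) (α₁ α₂ γ₁ γ₂ : ℝ)
    (hHur : IsHurwitz (Matrix.fromBlocks 0 1 (α₁ • 1 - γ₁ • J) (α₂ • 1 - γ₂ • J)))
    (P : Matrix (Fin (n - 1) ⊕ Fin (n - 1)) (Fin (n - 1) ⊕ Fin (n - 1)) ℝ)
    (hPsymm : Pᵀ = P) (hP : P.PosDef)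
    (hLyap : P * (Matrix.fromBlocks 0 1 (α₁ • 1 - γ₁ • J) (α₂ • 1 - γ₂ • J)) +
        (Matrix.fromBlocks 0 1 (α₁ • 1 - γ₁ • J) (α₂ • 1 - γ₂ • J))ᵀ * P = -1) :
    (∀ p v : EuclideanSpace ℝ (Fin n),
        (⨅ i, hP.isHermitian.eigenvalues i) * ‖yvec W p v‖ ^ 2 ≤
            yvec W p v ⬝ᵥ P.mulVec (yvec W p v) ∧
          yvec W p v ⬝ᵥ P.mulVec (yvec W p v) ≤
            (⨆ i, hP.isHermitian.eigenvalues i) * ‖yvec W p v‖ ^ 2) ∧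
      ∀ (p v : ℝ → EuclideanSpace ℝ (Fin n)),
        (∀ t, HasDerivAt p (v t) t) →
        (∀ t, HasDerivAt v
          (α₁ • p t + α₂ • v t - γ₁ • toE (L.mulVec (p t)) - γ₂ • toE (L.mulVec (v t))) t) →
        ∀ t, HasDerivAt (fun s => yvec W (p s) (v s) ⬝ᵥ P.mulVec (yvec W (p s) (v s)))
          (-‖yvec W (p t) (v t)‖ ^ 2) t := by
  refine ⟨fun p v => ⟨iInf_eigenvalues_mul_le _ _, le_iSup_eigenvalues_mul _ _⟩, ?_⟩
  intro p v hp hv t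
  have hp' : HasDerivAt (fun s => (p s : Fin n → ℝ)) (v t) t :=
    (EuclideanSpace.equiv (Fin n) ℝ).hasFDerivAt.comp_hasDerivAt t (hp t)
  have hv' : HasDerivAt (fun s => (v s : Fin n → ℝ))
      (α₁ • (p t : Fin n → ℝ) + α₂ • (v t : Fin n → ℝ) - γ₁ • L.mulVec (p t)
        - γ₂ • L.mulVec (v t)) t :=
    (EuclideanSpace.equiv (Fin n) ℝ).hasFDerivAt.comp_hasDerivAt t (hv t)
  have hy : HasDerivAt (fun s => (Sum.elim (W.mulVec (p s)) (W.mulVec (v s)) : _ → ℝ))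
      (Sum.elim (W.mulVec (v t)) (W.mulVec (α₁ • (p t : Fin n → ℝ) + α₂ • (v t : Fin n → ℝ)
        - γ₁ • L.mulVec (p t) - γ₂ • L.mulVec (v t)))) t := by
    refine hasDerivAt_pi.2 ?_
    rintro (i | i)
    · exact hasDerivAt_pi.1 (hasDerivAt_mulVec W hp') i
    · exact hasDerivAt_pi.1 (hasDerivAt_mulVec W hv') i
  rw [stacked_field_eq hJW] at hy
  have hV := hasDerivAt_quadForm P hy
  rw [lyapunov_quadForm hLyap] at hV
  have hnorm : ‖yvec W (p t) (v t)‖ ^ 2 =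
      (Sum.elim (W.mulVec (p t)) (W.mulVec (v t)) : _ → ℝ) ⬝ᵥ
        Sum.elim (W.mulVec (p t)) (W.mulVec (v t)) := by
    rw [EuclideanSpace.real_norm_sq_eq]
    exact Finset.sum_congr rfl fun i _ => sq _
  rw [hnorm]
  exact hV
end
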